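/- Let d ≥ 1. For k = 1, …, M let m_k ∈ ℝ^d and Σ_k be a positive definite d×d real matrix, and define q_k(x) = (2π)^{−d/2} (det Σ_k)^{−1/2} exp( −(1/2)(x − m_k)ᵀ Σ_k^{−1} (x − m_k) ). Let α_1, …, α_M > 0 with Σ_k α_k = 1, π(x) = Σ_k α_k q_k(x), and β ∈ (0,1]. Define r(x) = π(x)^β / ( Σ_k α_k q_k(x)^β ) and T_j = ∫_{ℝ^d} r(x) q_j(x)^β dx. Then for every j: α_j T_j / ( Σ_k α_k T_k ) ≥ ( α_j ∫ q_j(x)^β dx / ( Σ_k α_k ∫ q_k(x)^β dx ) ) · min_k α_k. In particular, if Σ_1 = ⋯ = Σ_M, then α_j T_j / ( Σ_k α_k T_k ) ≥ (min_k α_k)². -/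

import Mathlib

open MeasureTheory Matrix

lemma aux_coercive {d : ℕ} (hd : 1 ≤ d) (A : Matrix (Fin d) (Fin d) ℝ) (hA : A.PosDef) :
    ∃ c : ℝ, 0 < c ∧ ∀ y : Fin d → ℝ, c * ∑ i, y i ^ 2 ≤ y ⬝ᵥ (A *ᵥ y) := by
  have hpos : ∀ y : Fin d → ℝ, y ≠ 0 → 0 < y ⬝ᵥ (A *ᵥ y) := by
    intro y hy
    simpa using hA.dotProduct_mulVec_pos hy
  have hcont : Continuous (fun y : Fin d → ℝ => y ⬝ᵥ (A *ᵥ y)) := by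
    fun_prop
  have : Nonempty (Fin d) := ⟨⟨0, hd⟩⟩
  obtain ⟨y0, hy0, hmin⟩ := (isCompact_sphere (0 : Fin d → ℝ) 1).exists_isMinOn
    (NormedSpace.sphere_nonempty.2 zero_le_one) hcont.continuousOn
  have hy0' : y0 ≠ 0 := by
    rintro rfl
    simp at hy0
  have hd0 : (0 : ℝ) < d := by exact_mod_cast hd
  refine ⟨(y0 ⬝ᵥ (A *ᵥ y0)) / d, div_pos (hpos _ hy0') hd0, ?_⟩
  intro y
  have hs : ∑ i, y i ^ 2 ≤ d * ‖y‖ ^ 2 := by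
    calc ∑ i, y i ^ 2 ≤ ∑ _i : Fin d, ‖y‖ ^ 2 := by
          apply Finset.sum_le_sum
          intro i _
          rw [← sq_abs (y i)]
          exact pow_le_pow_left₀ (abs_nonneg _) (norm_le_pi_norm y i) 2
      _ = d * ‖y‖ ^ 2 := by simp
  have hQ : (y0 ⬝ᵥ (A *ᵥ y0)) * ‖y‖ ^ 2 ≤ y ⬝ᵥ (A *ᵥ y) := by
    by_cases hy : y = 0
    · simp [hy]
    have hn : 0 < ‖y‖ := norm_pos_iff.2 hy
    have h1 : (‖y‖⁻¹ • y) ∈ Metric.sphere (0 : Fin d → ℝ) 1 := by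
      simp [norm_smul, hn.ne']
    have h2 := hmin h1
    simp only [Set.mem_ofPred_eq, mulVec_smul, smul_dotProduct, dotProduct_smul, smul_eq_mul] at h2
    calc _ ≤ (‖y‖⁻¹ * (‖y‖⁻¹ * (y ⬝ᵥ (A *ᵥ y)))) * ‖y‖ ^ 2 := by gcongr
      _ = _ := by field_simp
  calc _ ≤ (y0 ⬝ᵥ (A *ᵥ y0)) / d * (d * ‖y‖ ^ 2) := by
        have := (div_pos (hpos _ hy0') hd0).le
        gcongr
    _ = (y0 ⬝ᵥ (A *ᵥ y0)) * ‖y‖ ^ 2 := by field_simp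
    _ ≤ _ := hQ

lemma aux_integrable {d : ℕ} (hd : 1 ≤ d) (A : Matrix (Fin d) (Fin d) ℝ) (hA : A.PosDef)
    (b : ℝ) (hb : 0 < b) :
    Integrable (fun y : Fin d → ℝ => Real.exp (-b * (y ⬝ᵥ (A *ᵥ y)))) := by
  obtain ⟨c, hc, h⟩ := aux_coercive hd A hA
  have h1 : Integrable (fun y : Fin d → ℝ => ∏ i, Real.exp (-(b * c) * y i ^ 2)) :=
    Integrable.fintype_prod (f := fun (_ : Fin d) (t : ℝ) => Real.exp (-(b * c) * t ^ 2))
      (fun _ => integrable_exp_neg_mul_sq (mul_pos hb hc))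
  refine h1.mono' (Continuous.aestronglyMeasurable (by fun_prop)) (Filter.Eventually.of_forall ?_)
  intro y
  rw [Real.norm_eq_abs, Real.abs_exp, ← Real.exp_sum, ← Finset.mul_sum]
  apply Real.exp_le_exp.2
  have := mul_le_mul_of_nonneg_left (h y) hb.le
  linarith

theorem stmt_18 (d M : ℕ) (hd : 1 ≤ d)
    (m : Fin M → (Fin d → ℝ))
    (S : Fin M → Matrix (Fin d) (Fin d) ℝ) (hS : ∀ k, (S k).PosDef)
    (α : Fin M → ℝ) (hα : ∀ k, 0 < α k) (hsum : ∑ k, α k = 1)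
    (q : Fin M → (Fin d → ℝ) → ℝ)
    (hq : ∀ k x, q k x = (2 * Real.pi) ^ (-(d : ℝ) / 2) * (S k).det ^ (-(1 : ℝ) / 2) *
      Real.exp (-(1 / 2) * ((x - m k) ⬝ᵥ ((S k)⁻¹ *ᵥ (x - m k)))))
    (π : (Fin d → ℝ) → ℝ) (hπ : ∀ x, π x = ∑ k, α k * q k x)
    (β : ℝ) (hβ0 : 0 < β) (hβ1 : β ≤ 1)
    (r : (Fin d → ℝ) → ℝ) (hr : ∀ x, r x = π x ^ β / ∑ k, α k * q k x ^ β)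
    (T : Fin M → ℝ) (hT : ∀ j, T j = ∫ x, r x * q j x ^ β)
    (αmin : ℝ) (hαmin : IsLeast (Set.range α) αmin) :
    (∀ j, α j * T j / (∑ k, α k * T k)
      ≥ (α j * (∫ x, q j x ^ β) / ∑ k, α k * ∫ x, q k x ^ β) * αmin) ∧
    ((∀ k l, S k = S l) → ∀ j, α j * T j / (∑ k, α k * T k) ≥ αmin ^ 2) := by
  obtain ⟨⟨k0, hk0⟩, hlb⟩ := hαmin
  have hle : ∀ k, αmin ≤ α k := fun k => hlb ⟨k, rfl⟩
  have hm0 : 0 < αmin := hk0 ▸ hα k0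
  have hm1 : αmin ≤ 1 := by
    rw [← hk0, ← hsum]
    exact Finset.single_le_sum (fun i _ => (hα i).le) (Finset.mem_univ k0)
  have : Nonempty (Fin M) := ⟨k0⟩
  have hne : (Finset.univ : Finset (Fin M)).Nonempty := Finset.univ_nonempty
  have hC : ∀ k, 0 < (2 * Real.pi) ^ (-(d : ℝ) / 2) * (S k).det ^ (-(1 : ℝ) / 2) := fun k =>
    mul_pos (Real.rpow_pos_of_pos (by positivity) _) (Real.rpow_pos_of_pos (hS k).det_pos _)
  have hqpos : ∀ k x, 0 < q k x := fun k x => by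
    rw [hq]; exact mul_pos (hC k) (Real.exp_pos _)
  have hqc : ∀ k, Continuous (q k) := fun k => by
    rw [show q k = _ from funext (hq k)]; fun_prop
  have hqbc : ∀ k, Continuous (fun x => q k x ^ β) := fun k =>
    (hqc k).rpow_const (fun x => Or.inl (hqpos k x).ne')
  have hqbpos : ∀ k x, 0 < q k x ^ β := fun k x => Real.rpow_pos_of_pos (hqpos k x) _
  have hqb : ∀ k x, q k x ^ β = ((2 * Real.pi) ^ (-(d : ℝ) / 2) * (S k).det ^ (-(1 : ℝ) / 2)) ^ β *
      Real.exp (-(β / 2) * ((x - m k) ⬝ᵥ ((S k)⁻¹ *ᵥ (x - m k)))) := fun k x => by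
    rw [hq, Real.mul_rpow (hC k).le (Real.exp_pos _).le, ← Real.exp_mul]
    ring_nf
  have hint : ∀ k, Integrable (fun x => q k x ^ β) := fun k => by
    simp only [hqb]
    exact ((aux_integrable hd _ (hS k).inv (β / 2) (by positivity)).comp_sub_right (m k)).const_mul _
  have hIpos : ∀ k, 0 < ∫ x, q k x ^ β := fun k =>
    integral_pos_of_integrable_nonneg_nonzero (x := 0) (hqbc k) (hint k) (fun x => (hqbpos k x).le)
      (hqbpos k 0).ne'
  have hDpos : ∀ x, 0 < ∑ k, α k * q k x ^ β := fun x =>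
    Finset.sum_pos (fun k _ => mul_pos (hα k) (hqbpos k x)) hne
  have hπpos : ∀ x, 0 < π x := fun x => by
    rw [hπ]; exact Finset.sum_pos (fun k _ => mul_pos (hα k) (hqpos k x)) hne
  have hπc : Continuous π := by
    rw [show π = _ from funext hπ]
    exact continuous_finsetSum _ (fun k _ => (hqc k).const_mul _)
  have hrc : Continuous r := by
    rw [show r = _ from funext hr]
    exact (hπc.rpow_const (fun x => Or.inl (hπpos x).ne')).div
      (continuous_finsetSum _ (fun k _ => (hqbc k).const_mul _)) (fun x => (hDpos x).ne')
  have hr1 : ∀ x, 1 ≤ r x := fun x => by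
    rw [hr, one_le_div (hDpos x), hπ]
    have := (Real.concaveOn_rpow hβ0.le hβ1).le_map_sum (t := Finset.univ) (w := α)
      (p := fun k => q k x) (fun i _ => (hα i).le) hsum (fun i _ => (hqpos i x).le)
    simpa using this
  have hr2 : ∀ x, r x ≤ 1 / αmin := fun x => by
    rw [hr, div_le_iff₀ (hDpos x), hπ]
    obtain ⟨l, hl⟩ := Finite.exists_max (fun k => q k x)
    have h0 : ∑ k, α k * q k x ≤ q l x := by
      calc _ ≤ ∑ k, α k * q l x :=
            Finset.sum_le_sum fun k _ => mul_le_mul_of_nonneg_left (hl k) (hα k).le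
        _ = _ := by rw [← Finset.sum_mul, hsum, one_mul]
    have h2 : 1 ≤ 1 / αmin * α l := by
      rw [one_div, inv_mul_eq_div, one_le_div hm0]; exact hle l
    calc (∑ k, α k * q k x) ^ β ≤ q l x ^ β :=
          Real.rpow_le_rpow (Finset.sum_nonneg fun k _ => (mul_pos (hα k) (hqpos k x)).le) h0 hβ0.le
      _ ≤ (1 / αmin * α l) * q l x ^ β := le_mul_of_one_le_left (hqbpos l x).le h2
      _ = 1 / αmin * (α l * q l x ^ β) := by ring
      _ ≤ _ := mul_le_mul_of_nonneg_left
          (Finset.single_le_sum (f := fun k => α k * q k x ^ β)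
            (fun k _ => (mul_pos (hα k) (hqbpos k x)).le) (Finset.mem_univ l))
          (by positivity)
  have hintT : ∀ k, Integrable (fun x => r x * q k x ^ β) := fun k => by
    refine ((hint k).const_mul (1 / αmin)).mono' (hrc.mul (hqbc k)).aestronglyMeasurable
      (Filter.Eventually.of_forall fun x => ?_)
    rw [Real.norm_eq_abs, abs_of_nonneg (mul_nonneg (zero_le_one.trans (hr1 x)) (hqbpos k x).le)]
    exact mul_le_mul_of_nonneg_right (hr2 x) (hqbpos k x).le
  have hT1 : ∀ k, ∫ x, q k x ^ β ≤ T k := fun k => by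
    rw [hT]
    exact integral_mono (hint k) (hintT k) fun x =>
      le_mul_of_one_le_left (hqbpos k x).le (hr1 x)
  have hT2 : ∀ k, T k ≤ 1 / αmin * ∫ x, q k x ^ β := fun k => by
    rw [hT, ← integral_const_mul]
    exact integral_mono (hintT k) ((hint k).const_mul _) fun x =>
      mul_le_mul_of_nonneg_right (hr2 x) (hqbpos k x).le
  have hTpos : ∀ k, 0 < T k := fun k => (hIpos k).trans_le (hT1 k)
  have hSI : 0 < ∑ k, α k * ∫ x, q k x ^ β :=
    Finset.sum_pos (fun k _ => mul_pos (hα k) (hIpos k)) hne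
  have hST : 0 < ∑ k, α k * T k := Finset.sum_pos (fun k _ => mul_pos (hα k) (hTpos k)) hne
  have hSle : αmin * ∑ k, α k * T k ≤ ∑ k, α k * ∫ x, q k x ^ β := by
    rw [Finset.mul_sum]
    apply Finset.sum_le_sum
    intro k _
    have h := mul_le_mul_of_nonneg_left (hT2 k) (mul_pos hm0 (hα k)).le
    calc _ = αmin * α k * T k := by ring
      _ ≤ _ := h
      _ = _ := by field_simp
  have main : ∀ j, α j * T j / (∑ k, α k * T k)
      ≥ (α j * (∫ x, q j x ^ β) / ∑ k, α k * ∫ x, q k x ^ β) * αmin := fun j => by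
    rw [ge_iff_le, div_mul_eq_mul_div, div_le_div_iff₀ hSI hST]
    calc _ = α j * (∫ x, q j x ^ β) * (αmin * ∑ k, α k * T k) := by ring
      _ ≤ α j * T j * ∑ k, α k * ∫ x, q k x ^ β :=
        mul_le_mul (mul_le_mul_of_nonneg_left (hT1 j) (hα j).le) hSle
          (mul_pos hm0 hST).le (mul_pos (hα j) (hTpos j)).le
  refine ⟨main, fun hSS j => ?_⟩
  have hI : ∀ k, ∫ x, q k x ^ β = ∫ x, q j x ^ β := fun k => by
    simp only [hqb, hSS k j]
    rw [integral_sub_right_eq_self (fun y => ((2 * Real.pi) ^ (-(d : ℝ) / 2) * (S j).det ^ (-(1 : ℝ) / 2)) ^ β *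
      Real.exp (-(β / 2) * (y ⬝ᵥ ((S j)⁻¹ *ᵥ y)))) (m k), integral_sub_right_eq_self (fun y => ((2 * Real.pi) ^ (-(d : ℝ) / 2) * (S j).det ^ (-(1 : ℝ) / 2)) ^ β *
      Real.exp (-(β / 2) * (y ⬝ᵥ ((S j)⁻¹ *ᵥ y)))) (m j)]
  have h := main j
  have h3 : ∑ k, α k * ∫ x, q k x ^ β = ∫ x, q j x ^ β := by
    simp only [hI]
    rw [← Finset.sum_mul, hsum, one_mul]
  rw [h3, mul_div_cancel_right₀ _ (hIpos j).ne'] at h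
  have := mul_le_mul_of_nonneg_right (hle j) hm0.le
  rw [sq]
  exact this.trans h
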